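/- The inverse backstepping kernel r is a real-analytic function on ℝ² and solves the Goursat problem: r_xx(x,y) − r_yy(x,y) = (λ/D) r(x,y) for all (x,y) ∈ ℝ², r(0,y) = 0 for all y ∈ ℝ, and r(x,x) = (λ/(2D)) x for all x ∈ ℝ (so that (d/dx) r(x,x) = λ/(2D)). -/

import Mathlib

/-- `Ψ_j(x,y) = 2^{-j} ∑_{m=0}^∞ (−(λ/(4D))(y² − x²))^m / (m! (m+j)!)`,
which equals `J_j(z)/z^j` with `z = √((λ/D)(y² − x²))`. -/
noncomputable def Psi (D lam : ℝ) (j : ℕ) (x y : ℝ) : ℝ :=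
  (1 / 2 ^ j) *
    ∑' m : ℕ, (-(lam / (4 * D)) * (y ^ 2 - x ^ 2)) ^ m / (m.factorial * (m + j).factorial : ℝ)

/-- The inverse backstepping kernel `r(x,y) = (λ/D) x Ψ₁(x,y)`. -/
noncomputable def rker (D lam : ℝ) (x y : ℝ) : ℝ :=
  lam / D * x * Psi D lam 1 x y

/-!
Up to a constant factor the kernel is `u(x, y) = x f(k (x² - y²))` with `k = λ/(4D)` and `f` the
Bessel–Clifford function `𝒞₁`. For any twice differentiable `f`, writing `w = k (x² - y²)`,
`u_xx - u_yy = 4 k x (w f''(w) + 2 f'(w))`, so `u` solves `u_xx - u_yy = 4 k u` as soon as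
`w f'' + 2 f' = f`. Since `𝒞ₙ' = 𝒞ₙ₊₁`, for `f = 𝒞₁` this is the recurrence
`𝒞₁ = 2 𝒞₂ + w 𝒞₃`.
-/

open FormalMultilinearSeries
open scoped Nat

section Derivatives

variable {𝕜 : Type*} [NontriviallyNormedField 𝕜]

theorem hasDerivAt_sum_of_enorm_lt_radius {F : Type*} [NormedAddCommGroup F] [NormedSpace 𝕜 F]
    [CompleteSpace F] {p : FormalMultilinearSeries 𝕜 𝕜 F} {z : 𝕜} (hz : ‖z‖ₑ < p.radius) :
    HasDerivAt p.sum (∑' m : ℕ, z ^ m • (m + 1) • p.coeff (m + 1)) z := by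
  have hz' : z ∈ Metric.eball 0 p.derivSeries.radius := by
    simpa using hz.trans_le p.radius_le_radius_derivSeries
  have hsum := (p.derivSeries.hasSum hz').mapL (ContinuousLinearMap.apply 𝕜 F (1 : 𝕜))
  refine (FormalMultilinearSeries.hasFDerivAt_sum hz).hasDerivAt.congr_deriv ?_
  simpa [derivSeries_coeff_one] using hsum.tsum_eq.symm

theorem iteratedDeriv_two_eq_of_hasDerivAt {F : Type*} [NormedAddCommGroup F] [NormedSpace 𝕜 F]
    {f f' : 𝕜 → F} {f'' : F} {z : 𝕜} (hf : ∀ w, HasDerivAt f (f' w) w)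
    (hf' : HasDerivAt f' f'' z) : iteratedDeriv 2 f z = f'' := by
  rw [iteratedDeriv_succ, iteratedDeriv_one, funext fun w => (hf w).deriv, hf'.deriv]

end Derivatives

section WaveOperator

variable {𝕜 : Type*} [NontriviallyNormedField 𝕜] {f f' f'' : 𝕜 → 𝕜}

theorem hasDerivAt_comp_mul_sq_sub_left {d k x y : 𝕜}
    (hf : HasDerivAt f d (k * (x ^ 2 - y ^ 2))) :
    HasDerivAt (fun x => f (k * (x ^ 2 - y ^ 2))) (2 * k * x * d) x := by
  have hw := ((hasDerivAt_pow 2 x).sub_const (y ^ 2)).const_mul k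
  refine (hf.comp x hw).congr_deriv ?_
  push_cast
  ring

theorem hasDerivAt_comp_mul_sq_sub_right {d k x y : 𝕜}
    (hf : HasDerivAt f d (k * (x ^ 2 - y ^ 2))) :
    HasDerivAt (fun y => f (k * (x ^ 2 - y ^ 2))) (-(2 * k * y * d)) y := by
  have hw := ((hasDerivAt_pow 2 y).const_sub (x ^ 2)).const_mul k
  refine (hf.comp y hw).congr_deriv ?_
  push_cast
  ring

theorem iteratedDeriv_two_mul_comp_mul_sq_sub_left (hf : ∀ w, HasDerivAt f (f' w) w)
    (hf' : ∀ w, HasDerivAt f' (f'' w) w) (k x y : 𝕜) :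
    iteratedDeriv 2 (fun x => x * f (k * (x ^ 2 - y ^ 2))) x =
      6 * k * x * f' (k * (x ^ 2 - y ^ 2)) + 4 * k ^ 2 * x ^ 3 * f'' (k * (x ^ 2 - y ^ 2)) := by
  refine iteratedDeriv_two_eq_of_hasDerivAt (f' := fun x =>
      f (k * (x ^ 2 - y ^ 2)) + 2 * k * (x ^ 2 * f' (k * (x ^ 2 - y ^ 2)))) (fun x => ?_) ?_
  · refine ((hasDerivAt_id' x).mul (hasDerivAt_comp_mul_sq_sub_left (hf _))).congr_deriv ?_
    ring
  · refine ((hasDerivAt_comp_mul_sq_sub_left (hf _)).add (((hasDerivAt_pow 2 x).mul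
      (hasDerivAt_comp_mul_sq_sub_left (hf' _))).const_mul (2 * k))).congr_deriv ?_
    push_cast
    ring

theorem iteratedDeriv_two_mul_comp_mul_sq_sub_right (hf : ∀ w, HasDerivAt f (f' w) w)
    (hf' : ∀ w, HasDerivAt f' (f'' w) w) (k x y : 𝕜) :
    iteratedDeriv 2 (fun y => x * f (k * (x ^ 2 - y ^ 2))) y =
      4 * k ^ 2 * x * y ^ 2 * f'' (k * (x ^ 2 - y ^ 2)) - 2 * k * x * f' (k * (x ^ 2 - y ^ 2)) := by
  refine iteratedDeriv_two_eq_of_hasDerivAt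
    (fun y => (hasDerivAt_comp_mul_sq_sub_right (hf _)).const_mul x) ?_
  refine ((((hasDerivAt_id' y).const_mul (2 * k)).mul
    (hasDerivAt_comp_mul_sq_sub_right (hf' _))).neg.const_mul x).congr_deriv ?_
  ring

theorem kleinGordon_mul_comp_mul_sq_sub (hf : ∀ w, HasDerivAt f (f' w) w)
    (hf' : ∀ w, HasDerivAt f' (f'' w) w) (hode : ∀ w, f w = 2 * f' w + w * f'' w) (k x y : 𝕜) :
    iteratedDeriv 2 (fun x => x * f (k * (x ^ 2 - y ^ 2))) x -
        iteratedDeriv 2 (fun y => x * f (k * (x ^ 2 - y ^ 2))) y =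
      4 * k * (x * f (k * (x ^ 2 - y ^ 2))) := by
  rw [iteratedDeriv_two_mul_comp_mul_sq_sub_left hf hf',
    iteratedDeriv_two_mul_comp_mul_sq_sub_right hf hf', hode]
  ring

end WaveOperator

section BesselClifford

variable {𝕜 : Type*} [RCLike 𝕜]

variable (𝕜) in
/-- The power series `∑ₘ wᵐ / (m! (m + n)!)` of the Bessel–Clifford function of order `n`. -/
noncomputable def besselCliffordSeries (n : ℕ) : FormalMultilinearSeries 𝕜 𝕜 𝕜 :=
  ofScalars 𝕜 fun m => ((m ! * (m + n)! : ℕ) : 𝕜)⁻¹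

/-- The Bessel–Clifford function `𝒞ₙ(w) = ∑ₘ wᵐ / (m! (m + n)!)` of order `n`. It is the entire
function underlying the Bessel functions: `Jₙ(z) = (z/2)ⁿ 𝒞ₙ(-z²/4)` and
`Iₙ(z) = (z/2)ⁿ 𝒞ₙ(z²/4)`. -/
noncomputable def besselClifford (n : ℕ) : 𝕜 → 𝕜 :=
  (besselCliffordSeries 𝕜 n).sum

theorem coeff_besselCliffordSeries (n m : ℕ) :
    (besselCliffordSeries 𝕜 n).coeff m = ((m ! * (m + n)! : ℕ) : 𝕜)⁻¹ :=
  coeff_ofScalars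

theorem radius_besselCliffordSeries (n : ℕ) : (besselCliffordSeries 𝕜 n).radius = ⊤ := by
  refine radius_eq_top_of_summable_norm _ fun r => ?_
  refine .of_nonneg_of_le (fun m => by positivity) (fun m => ?_)
    (Real.summable_pow_div_factorial r)
  have hfactorial : (m ! : ℝ) ≤ (m ! * (m + n)! : ℕ) :=
    mod_cast Nat.le_mul_of_pos_right _ (Nat.factorial_pos _)
  rw [besselCliffordSeries, ofScalars_norm, norm_inv, RCLike.norm_natCast, inv_mul_eq_div]
  gcongr

theorem hasFPowerSeriesOnBall_besselClifford (n : ℕ) :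
    HasFPowerSeriesOnBall (besselClifford n) (besselCliffordSeries 𝕜 n) 0 ⊤ :=
  radius_besselCliffordSeries (𝕜 := 𝕜) n ▸
    (besselCliffordSeries 𝕜 n).hasFPowerSeriesOnBall (by simp [radius_besselCliffordSeries])

@[fun_prop]
theorem analyticAt_besselClifford (n : ℕ) (w : 𝕜) : AnalyticAt 𝕜 (besselClifford n) w :=
  (hasFPowerSeriesOnBall_besselClifford n).analyticAt_of_mem (by simp)

theorem hasSum_besselClifford (n : ℕ) (w : 𝕜) :
    HasSum (fun m : ℕ => w ^ m / (m ! * (m + n)!)) (besselClifford n w) := by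
  simpa [apply_eq_pow_smul_coeff, coeff_besselCliffordSeries, div_eq_mul_inv] using
    (hasFPowerSeriesOnBall_besselClifford n).hasSum (y := w) (by simp)

theorem besselClifford_zero_right (n : ℕ) : besselClifford n (0 : 𝕜) = (n ! : 𝕜)⁻¹ := by
  refine (hasSum_besselClifford n 0).unique ?_
  simpa using hasSum_single (f := fun m : ℕ => (0 : 𝕜) ^ m / (m ! * (m + n)!)) 0
    fun m hm => by simp [hm]

theorem hasDerivAt_besselClifford (n : ℕ) (w : 𝕜) :
    HasDerivAt (besselClifford n) (besselClifford (n + 1) w) w := by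
  refine (hasDerivAt_sum_of_enorm_lt_radius (p := besselCliffordSeries 𝕜 n)
    (by simp [radius_besselCliffordSeries])).congr_deriv ?_
  rw [← (hasSum_besselClifford (n + 1) w).tsum_eq]
  refine tsum_congr fun m => ?_
  rw [coeff_besselCliffordSeries, Nat.factorial_succ, Nat.add_right_comm m 1 n]
  simp only [smul_eq_mul, nsmul_eq_mul]
  push_cast
  field_simp
  rw [Nat.add_assoc]

theorem besselClifford_eq_add (n : ℕ) (w : 𝕜) :
    besselClifford n w = (n + 1) * besselClifford (n + 1) w + w * besselClifford (n + 2) w := by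
  have htail (n : ℕ) := (hasSum_nat_add_iff' 1).2 (hasSum_besselClifford n w)
  have hcoeff (m : ℕ) : w ^ (m + 1) / ((m + 1)! * (m + 1 + n)!) =
      (n + 1) * (w ^ (m + 1) / ((m + 1)! * (m + 1 + (n + 1))!)) +
        w * (w ^ m / (m ! * (m + (n + 2))!)) := by
    have hne : (m + n + 1 + 1 : 𝕜) ≠ 0 := by exact_mod_cast Nat.succ_ne_zero (m + n + 1)
    rw [show m + 1 + (n + 1) = m + n + 1 + 1 by lia, show m + (n + 2) = m + n + 1 + 1 by lia,
      Nat.add_right_comm m 1 n, Nat.factorial_succ (m + n + 1), Nat.factorial_succ m]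
    push_cast
    field_simp
    ring
  have hsum := (htail n).unique <| (((htail (n + 1)).mul_left (n + 1 : 𝕜)).add
    ((hasSum_besselClifford (n + 2) w).mul_left w)).congr_fun hcoeff
  have hzero : (n ! : 𝕜)⁻¹ = (n + 1) * ((n + 1)! : 𝕜)⁻¹ := by
    rw [Nat.factorial_succ]
    push_cast
    field_simp
  simp only [Finset.range_one, Finset.sum_singleton, pow_zero, Nat.factorial_zero, Nat.cast_one,
    zero_add, one_mul, one_div] at hsum
  linear_combination hsum + hzero

end BesselClifford

theorem rker_eq_mul_besselClifford (D lam x y : ℝ) :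
    rker D lam x y =
      lam / (2 * D) * (x * besselClifford 1 (lam / (4 * D) * (x ^ 2 - y ^ 2))) := by
  rw [rker, Psi, ← (hasSum_besselClifford 1 _).tsum_eq, neg_mul_comm, neg_sub]
  ring

theorem analyticAt_rker (D lam : ℝ) (p : ℝ × ℝ) :
    AnalyticAt ℝ (fun p : ℝ × ℝ => rker D lam p.1 p.2) p := by
  have hfst : AnalyticAt ℝ (fun p : ℝ × ℝ => p.1) p := analyticAt_fst
  have hsnd : AnalyticAt ℝ (fun p : ℝ × ℝ => p.2) p := analyticAt_snd
  simp only [rker_eq_mul_besselClifford]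
  fun_prop

/-- The direct kernel `q` with parameters `D` and `λ` is `rker D (-λ)`, so negative values of `lam`
give its Goursat problem. -/
theorem inverse_kernel_goursat_general (D lam : ℝ) (hD : D ≠ 0) :
    (∀ p : ℝ × ℝ, AnalyticAt ℝ (fun p : ℝ × ℝ => rker D lam p.1 p.2) p) ∧
    (∀ x y : ℝ,
      iteratedDeriv 2 (fun x' => rker D lam x' y) x
        - iteratedDeriv 2 (fun y' => rker D lam x y') y = lam / D * rker D lam x y) ∧
    (∀ y : ℝ, rker D lam 0 y = 0) ∧
    (∀ x : ℝ, rker D lam x x = lam / (2 * D) * x) := by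
  refine ⟨analyticAt_rker D lam, fun x y => ?_, fun y => by simp [rker], fun x => ?_⟩
  · have hode (w : ℝ) : besselClifford 1 w = 2 * besselClifford 2 w + w * besselClifford 3 w := by
      simpa [one_add_one_eq_two] using besselClifford_eq_add 1 w
    have hconst : lam / D = 4 * (lam / (4 * D)) := by field_simp
    simp only [rker_eq_mul_besselClifford]
    rw [iteratedDeriv_const_mul_field, iteratedDeriv_const_mul_field, ← mul_sub,
      kleinGordon_mul_comp_mul_sq_sub (hasDerivAt_besselClifford 1)
        (hasDerivAt_besselClifford 2) hode, hconst]
    ring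
  · simp [rker_eq_mul_besselClifford, besselClifford_zero_right]

/-- The inverse backstepping kernel `r` is real-analytic on `ℝ²` and solves the
Goursat problem `r_xx − r_yy = (λ/D) r`, `r(0,y) = 0`, `r(x,x) = (λ/(2D)) x`. -/
theorem inverse_kernel_goursat (D lam : ℝ) (hD : 0 < D) (hlam : 0 < lam) :
    (∀ p : ℝ × ℝ, AnalyticAt ℝ (fun p : ℝ × ℝ => rker D lam p.1 p.2) p) ∧
    (∀ x y : ℝ,
      iteratedDeriv 2 (fun x' => rker D lam x' y) x
        - iteratedDeriv 2 (fun y' => rker D lam x y') y = lam / D * rker D lam x y) ∧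
    (∀ y : ℝ, rker D lam 0 y = 0) ∧
    (∀ x : ℝ, rker D lam x x = lam / (2 * D) * x) :=
  inverse_kernel_goursat_general D lam hD.ne'
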